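/- arXiv:1412.4805 — 2 statements merged into one kernel-verified Lean document; each statement's English description precedes it below -/
import Mathlib

section
/- Let N ≥ 1 and let x, y ∈ ℝ^N have nonnegative components with ∑_{i=1}^N y_i > 0, and suppose x ≪ y. Set α = (∑_{i=1}^N x_i)/(∑_{i=1}^N y_i). Then for every k = 1,…,N one has ∑_{i=1}^k x_[i] ≤ α ∑_{i=1}^k y_[i], with equality for k = N; in other words, x is majorized by the vector α·y (x ≺ α y). -/
/-!
Writing `X = ∑ x_i`, `Y = ∑ y_i`, `a` and `b` for the sums of the `k` largest components of `x` and
`y`, the strong majorization inequality `a (Y - b) ≤ b (X - a)` loses its common term `a b` and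
becomes `a Y ≤ b X`; dividing by `Y > 0` gives the claim for `k < N`. For `k = N` the partial sums
are the full sums (`partSum_self`), and both sides equal `X`.
-/

open Finset

/-- The decreasing rearrangement of `x`: `sortedDesc x i` is the `(i+1)`-th largest
component of the vector `x`. -/
noncomputable def sortedDesc {N : ℕ} (x : Fin N → ℝ) : Fin N → ℝ :=
  fun i => x (Tuple.sort x i.rev)

/-- `partSum x k = ∑_{i=1}^{k} x_[i]`, the sum of the `k` largest components of `x`. -/
noncomputable def partSum {N : ℕ} (x : Fin N → ℝ) (k : ℕ) : ℝ :=
  ∑ i ∈ Finset.univ.filter (fun i : Fin N => (i : ℕ) < k), sortedDesc x i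

/-- `x ≺* y`: `x` is weakly majorized by `y`. -/
def WeaklyMajorized {N : ℕ} (x y : Fin N → ℝ) : Prop :=
  ∀ k, 1 ≤ k → k ≤ N → partSum x k ≤ partSum y k

/-- `x ≪ y`: `x` is strongly majorized by `y`, i.e. for each `k = 1, …, N-1`,
`(∑_{i=1}^k x_[i]) (∑_{i=k+1}^N y_[i]) ≤ (∑_{i=1}^k y_[i]) (∑_{i=k+1}^N x_[i])`,
and `∑ x_i ≤ ∑ y_i`. -/
def StronglyMajorized {N : ℕ} (x y : Fin N → ℝ) : Prop :=
  (∀ k, 1 ≤ k → k ≤ N - 1 →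
    partSum x k * ((∑ i, y i) - partSum y k) ≤ partSum y k * ((∑ i, x i) - partSum x k)) ∧
  (∑ i, x i) ≤ (∑ i, y i)

theorem partSum_self {N : ℕ} (x : Fin N → ℝ) : partSum x N = ∑ i, x i := by
  have hf : Finset.univ.filter (fun i : Fin N => (i : ℕ) < N) = Finset.univ :=
    Finset.filter_true_of_mem fun i _ => i.isLt
  unfold partSum sortedDesc
  rw [hf]
  exact Equiv.sum_comp (Fin.revPerm.trans (Tuple.sort x)) x

/-- If `x ≪ y` and `α = (∑ x_i)/(∑ y_i)`, then `∑_{i=1}^k x_[i] ≤ α ∑_{i=1}^k y_[i]`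
for every `k = 1, …, N`, with equality at `k = N`; i.e. `x ≺ α·y`. -/
theorem strongly_majorized_implies_majorized_scaled {N : ℕ} (hN : 1 ≤ N)
    (x y : Fin N → ℝ) (hx : ∀ i, 0 ≤ x i) (hy : ∀ i, 0 ≤ y i)
    (hpos : 0 < ∑ i, y i) (h : StronglyMajorized x y) :
    (∀ k, 1 ≤ k → k ≤ N →
      partSum x k ≤ ((∑ i, x i) / (∑ i, y i)) * partSum y k) ∧
    partSum x N = ((∑ i, x i) / (∑ i, y i)) * partSum y N := by
  have hN' : partSum x N = ((∑ i, x i) / (∑ i, y i)) * partSum y N := by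
    rw [partSum_self, partSum_self, div_mul_cancel₀ _ hpos.ne']
  refine ⟨fun k hk hkN => ?_, hN'⟩
  rcases hkN.eq_or_lt with rfl | hlt
  · exact hN'.le
  · have hs := h.1 k hk (by omega)
    rw [div_mul_eq_mul_div, le_div_iff₀ hpos]
    linarith
end

section
/- Let N ≥ 1 and let x, y ∈ ℝ^N have nonnegative components with ∑_{i=1}^N y_i > 0, and suppose x ≪ y. Set α = (∑_{i=1}^N x_i)/(∑_{i=1}^N y_i). Then for every function f : ℝ → ℝ that is convex on [0,∞) and satisfies f(0) = 0, one has f(x_1)+⋯+f(x_N) ≤ α·(f(y_1)+⋯+f(y_N)). -/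
/-!
Write `X = ∑ x_i`, `Y = ∑ y_i`, `α = X / Y`. Adding `A_k B_k` to both sides of
`A_k (Y - B_k) ≤ B_k (X - A_k)`, where `A_k`, `B_k` are the sums of the `k` largest components of
`x` and `y`, turns it into `A_k ≤ α B_k`; for `k = N` there is equality. So strong majorization
says that `x` is majorized, in the usual sense, by `α y` with `0 ≤ α ≤ 1`. Karamata's inequality
(`karamata_range`) then gives `∑ f (x_i) ≤ ∑ f (α y_i)`, and convexity with `f 0 = 0` gives
`f (α y_i) ≤ α f (y_i)`.

Karamata's inequality is proved by Abel summation (`sum_mul_nonpos_of_antitone`) applied to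
`f (a_i) - f (b_i) = c_i (a_i - b_i)`, where `c_i` is the slope of `f` between `b_i` and `a_i`. The
slopes decrease with `i` by convexity (`slope_le_slope_of_convexOn`). Where `a_i = b_i` the value
of `c_i` is irrelevant, so it is chosen by extending the antitone family of genuine slopes; this
avoids subgradients, which need not exist at the endpoint `0`.
-/

open Finset

/-- The secant slope of a convex function is monotone in the pair of its endpoints, which may be
given in either order. -/
lemma slope_le_slope_of_convexOn {f : ℝ → ℝ} {s : Set ℝ} (hf : ConvexOn ℝ s f)
    {p q p' q' : ℝ} (hp : p ∈ s) (hq : q ∈ s) (hp' : p' ∈ s) (hq' : q' ∈ s)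
    (hpp : p ≤ p') (hqq : q ≤ q') (hpq : p ≠ q) (hpq' : p' ≠ q') :
    slope f p q ≤ slope f p' q' := by
  -- The endpoints are moved one at a time; when `p = q'` the other order of moves is
  -- nondegenerate.
  by_cases h : q' = p
  · have h2 : p' ≠ q := by
      rintro rfl
      exact hpq (le_antisymm hpp (h ▸ hqq))
    calc slope f p q = slope f q p := slope_comm f p q
      _ ≤ slope f q p' := hf.slope_mono hq ⟨hp, hpq⟩ ⟨hp', h2⟩ hpp
      _ = slope f p' q := slope_comm f q p'
      _ ≤ slope f p' q' := hf.slope_mono hp' ⟨hq, h2.symm⟩ ⟨hq', hpq'.symm⟩ hqq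
  · calc slope f p q ≤ slope f p q' := hf.slope_mono hp ⟨hq, hpq.symm⟩ ⟨hq', h⟩ hqq
      _ = slope f q' p := slope_comm f p q'
      _ ≤ slope f q' p' := hf.slope_mono hq' ⟨hp, Ne.symm h⟩ ⟨hp', hpq'⟩ hpp
      _ = slope f p' q' := slope_comm f q' p'

/-- Abel summation: antitone weights applied to a sequence with nonpositive partial sums and zero
total give a nonpositive sum. -/
lemma sum_mul_nonpos_of_antitone {g d : ℕ → ℝ} (hg : Antitone g) {N : ℕ}
    (hd : ∀ k ≤ N, ∑ i ∈ range k, d i ≤ 0) (hN : ∑ i ∈ range N, d i = 0) :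
    ∑ i ∈ range N, g i * d i ≤ 0 := by
  -- At `k = 0` both sides vanish, so the truncated `k - 1` is harmless.
  have key : ∀ k ≤ N, ∑ i ∈ range k, g i * d i ≤ g (k - 1) * ∑ i ∈ range k, d i := by
    intro k
    induction k with
    | zero => simp
    | succ k ih =>
      intro hk
      have h1 := ih (by omega)
      have h2 := hd k (by omega)
      have h3 : g k ≤ g (k - 1) := hg (by omega)
      rw [sum_range_succ, sum_range_succ, Nat.add_sub_cancel]
      nlinarith [mul_nonneg (sub_nonneg.2 h3) (neg_nonneg.2 h2)]
  simpa [hN] using key N le_rfl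

/-- Karamata's inequality for decreasing sequences. -/
lemma karamata_range {f : ℝ → ℝ} {s : Set ℝ} (hf : ConvexOn ℝ s f) {a b : ℕ → ℝ}
    (ha : Antitone a) (hb : Antitone b) (has : ∀ i, a i ∈ s) (hbs : ∀ i, b i ∈ s) {N : ℕ}
    (hab : ∀ k ≤ N, ∑ i ∈ range k, a i ≤ ∑ i ∈ range k, b i)
    (hN : ∑ i ∈ range N, a i = ∑ i ∈ range N, b i) :
    ∑ i ∈ range N, f (a i) ≤ ∑ i ∈ range N, f (b i) := by
  let S : Set ℕ := {i | i < N ∧ b i ≠ a i}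
  have hS : S.Finite := (Set.finite_lt_nat N).subset fun i hi => hi.1
  have hc : AntitoneOn (fun i => slope f (b i) (a i)) S := fun i hi j hj hij =>
    slope_le_slope_of_convexOn hf (hbs j) (has j) (hbs i) (has i) (hb hij) (ha hij) hj.2 hi.2
  obtain ⟨g, hg, hgS⟩ := hc.exists_antitone_extension (hS.image _).bddBelow (hS.image _).bddAbove
  have hfg : ∀ i ∈ range N, f (a i) - f (b i) = g i * (a i - b i) := by
    intro i hi
    by_cases h : b i = a i
    · simp [h]
    · have hgi : slope f (b i) (a i) = g i := hgS (show i ∈ S from ⟨mem_range.1 hi, h⟩)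
      rw [← hgi, slope_def_field, div_mul_cancel₀ _ (sub_ne_zero.2 (Ne.symm h))]
  rw [← sub_nonpos, ← sum_sub_distrib, sum_congr rfl hfg]
  refine sum_mul_nonpos_of_antitone hg (fun k hk => ?_) ?_
  · rw [sum_sub_distrib, sub_nonpos]
    exact hab k hk
  · rw [sum_sub_distrib, hN, sub_self]

/-- The decreasing rearrangement of `x`, extended by zero to a sequence on `ℕ`. -/
noncomputable def descSeq {N : ℕ} (x : Fin N → ℝ) (n : ℕ) : ℝ :=
  if h : n < N then sortedDesc x ⟨n, h⟩ else 0

lemma descSeq_coe {N : ℕ} (x : Fin N → ℝ) (i : Fin N) : descSeq x i = sortedDesc x i := by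
  simp [descSeq]

lemma descSeq_nonneg {N : ℕ} {x : Fin N → ℝ} (hx : ∀ i, 0 ≤ x i) (n : ℕ) :
    0 ≤ descSeq x n := by
  unfold descSeq
  split_ifs
  · exact hx _
  · exact le_rfl

/-- Nonnegativity of `x` is what keeps the extension by zero decreasing. -/
lemma descSeq_antitone {N : ℕ} {x : Fin N → ℝ} (hx : ∀ i, 0 ≤ x i) : Antitone (descSeq x) := by
  intro m n hmn
  by_cases hn : n < N
  · have hm : m < N := by omega
    simp only [descSeq, hn, hm, dif_pos]
    exact Tuple.monotone_sort x (Fin.rev_le_rev.2 hmn)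
  · simpa [descSeq, hn] using descSeq_nonneg hx m

lemma sum_range_descSeq {N : ℕ} (x : Fin N → ℝ) (F : ℝ → ℝ) :
    ∑ n ∈ range N, F (descSeq x n) = ∑ i, F (x i) := by
  rw [← Fin.sum_univ_eq_sum_range (fun n => F (descSeq x n)) N]
  simp only [descSeq_coe, sortedDesc]
  exact Equiv.sum_comp (Fin.revPerm.trans (Tuple.sort x)) (fun i => F (x i))

lemma partSum_eq_sum_range {N : ℕ} (x : Fin N → ℝ) {k : ℕ} (hk : k ≤ N) :
    partSum x k = ∑ n ∈ range k, descSeq x n := by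
  have h : (range N).filter (· < k) = range k := by
    ext n
    simp only [mem_filter, mem_range]
    omega
  rw [← h, sum_filter, ← Fin.sum_univ_eq_sum_range (fun n => if n < k then descSeq x n else 0),
    partSum, sum_filter]
  simp only [descSeq_coe]

/-- Strong Hardy–Littlewood–Pólya type inequality: if `x ≪ y`,
`α = (∑ x_i)/(∑ y_i)` and `f` is convex on `[0,∞)` with `f(0) = 0`, then
`f(x₁)+⋯+f(x_N) ≤ α (f(y₁)+⋯+f(y_N))`. -/
theorem strong_hardy_littlewood_polya {N : ℕ} (hN : 1 ≤ N)
    (x y : Fin N → ℝ) (hx : ∀ i, 0 ≤ x i) (hy : ∀ i, 0 ≤ y i)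
    (hpos : 0 < ∑ i, y i) (h : StronglyMajorized x y)
    (f : ℝ → ℝ) (hf : ConvexOn ℝ (Set.Ici 0) f) (hf0 : f 0 = 0) :
    (∑ i, f (x i)) ≤ ((∑ i, x i) / (∑ i, y i)) * (∑ i, f (y i)) := by
  set α : ℝ := (∑ i, x i) / (∑ i, y i) with hα
  have hα0 : 0 ≤ α := div_nonneg (sum_nonneg fun i _ => hx i) hpos.le
  have hα1 : α ≤ 1 := (div_le_one hpos).2 h.2
  have hXY : α * ∑ i, y i = ∑ i, x i := div_mul_cancel₀ _ hpos.ne'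
  have htot : ∑ n ∈ range N, descSeq x n = ∑ n ∈ range N, α * descSeq y n := by
    rw [← mul_sum, sum_range_descSeq x (fun t => t), sum_range_descSeq y (fun t => t), hXY]
  have hpart : ∀ k ≤ N, ∑ n ∈ range k, descSeq x n ≤ ∑ n ∈ range k, α * descSeq y n := by
    intro k hk
    rcases Nat.eq_zero_or_pos k with rfl | hk0
    · simp
    rcases hk.eq_or_lt with rfl | hkN
    · exact htot.le
    have hmaj := h.1 k hk0 (by omega)
    rw [← mul_sum, ← partSum_eq_sum_range x hk, ← partSum_eq_sum_range y hk, hα, div_mul_eq_mul_div,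
      le_div_iff₀ hpos]
    linarith
  calc ∑ i, f (x i) = ∑ n ∈ range N, f (descSeq x n) := (sum_range_descSeq x f).symm
    _ ≤ ∑ n ∈ range N, f (α * descSeq y n) :=
        karamata_range hf (descSeq_antitone hx) ((descSeq_antitone hy).const_mul hα0)
          (descSeq_nonneg hx) (fun n => mul_nonneg hα0 (descSeq_nonneg hy n)) hpart htot
    _ = ∑ i, f (α * y i) := sum_range_descSeq y (fun t => f (α * t))
    _ ≤ ∑ i, α * f (y i) := by
        refine sum_le_sum fun i _ => ?_
        have := hf.2 (hy i) (Set.self_mem_Ici (a := (0 : ℝ))) hα0 (sub_nonneg.2 hα1)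
          (add_sub_cancel α 1)
        simpa [hf0] using this
    _ = α * ∑ i, f (y i) := (mul_sum _ _ _).symm
end
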